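/- arXiv:1812.11033 — 5 statements merged into one kernel-verified Lean document; each statement's English description precedes it below -/
import Mathlib

section
/- Let x : ℝ → ℂ be continuous and bounded, let g be a Schwartz-class window and σ : ℝ → (0,∞) a C¹ function. Then the adaptive STFT Ṽ_x(t,η) = ∫_ℝ x(t+τ) σ(t)^{−1} g(τ/σ(t)) e^{−2πiητ} dτ is differentiable in t and satisfies ∂_t Ṽ_x(t,η) = (2πiη − σ'(t)/σ(t)) Ṽ_x(t,η) − (σ'(t)/σ(t)) Ṽ^{g₃}_x(t,η) − (1/σ(t)) Ṽ^{g'}_x(t,η), where Ṽ^{g₃}_x(t,η) = ∫_ℝ x(t+τ) (τ/σ(t)²) g'(τ/σ(t)) e^{−2πiητ} dτ and Ṽ^{g'}_x(t,η) = ∫_ℝ x(t+τ) σ(t)^{−1} g'(τ/σ(t)) e^{−2πiητ} dτ. -/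
/-!
The substitution `u = t + τ` writes the adaptive STFT as `∫ x(u) K(t, u) du` with
`K(t, u) = σ(t)⁻¹ g((u - t) / σ(t)) e^{-2πiη(u - t)}`, so that `t` no longer enters the merely
continuous signal `x` but only the `C¹` kernel. The formula then follows by differentiating under
the integral sign. The chain rule (`hasDerivAt_stftKernel`) expresses `∂ₜK` through the kernels of
the windows `g`, `u g'(u)` and `g'`. The domination needed (`norm_stftKernel_le`) comes from the
decay `O((1 + v²)⁻¹)` of these three windows: since `σ` stays bounded above and away from `0` near
`t`, each kernel is bounded there by a constant multiple of `(1 + (u - t)²)⁻¹`, which is integrable.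
-/

open MeasureTheory Real Set Filter
open scoped Topology Real

noncomputable section

/-- `e2πi θ = exp(2πiθ)`. -/
def e2πi (θ : ℝ) : ℂ := Complex.exp (2 * (π : ℂ) * (θ : ℂ) * Complex.I)

/-- Fourier transform with the convention `ŵ(ξ) = ∫ w(u) e^{-2πiξu} du`. -/
def ft (w : ℝ → ℂ) (ξ : ℝ) : ℂ := ∫ u : ℝ, w u * e2πi (-(ξ * u))

/-- The adaptive STFT with window `w` and time-varying parameter `σ`. -/
def adSTFT (σ : ℝ → ℝ) (w : ℝ → ℂ) (x : ℝ → ℂ) (t η : ℝ) : ℂ :=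
  ∫ τ : ℝ, x (t + τ) * ((σ t : ℂ))⁻¹ * w (τ / σ t) * e2πi (-(η * τ))

/-- Absolute moments `I_n = ∫ |τ^n w(τ)| dτ`. -/
def absMom (w : ℝ → ℂ) (n : ℕ) : ℝ := ∫ τ : ℝ, |τ| ^ n * ‖w τ‖

/-- The window `g₁(u) = u g(u)`. -/
def g1w (g : ℝ → ℂ) : ℝ → ℂ := fun u => (u : ℂ) * g u

/-- The window `g₂(u) = u² g(u)`. -/
def g2w (g : ℝ → ℂ) : ℝ → ℂ := fun u => (u : ℂ) ^ 2 * g u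

/-- The window `g₃(u) = u g'(u)`. -/
def g3w (g : ℝ → ℂ) : ℝ → ℂ := fun u => (u : ℂ) * deriv g u

/-- `∂_t` of the adaptive STFT. -/
def adSTFTt (σ : ℝ → ℝ) (w : ℝ → ℂ) (x : ℝ → ℂ) (t η : ℝ) : ℂ :=
  deriv (fun s => adSTFT σ w x s η) t

/-- `∂_η` of the adaptive STFT. -/
def adSTFTη (σ : ℝ → ℝ) (w : ℝ → ℂ) (x : ℝ → ℂ) (t η : ℝ) : ℂ :=
  deriv (fun η' => adSTFT σ w x t η') η

/-- The complex phase transformation `ω^{adp,c}` of the adaptive FSST. -/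
def omegaC (σ : ℝ → ℝ) (g x : ℝ → ℂ) (t η : ℝ) : ℂ :=
  adSTFTt σ g x t η / (2 * (π : ℂ) * Complex.I * adSTFT σ g x t η)
  + ((deriv σ t : ℝ) : ℂ) / (2 * (π : ℂ) * Complex.I * (σ t : ℂ))
  + ((deriv σ t / σ t : ℝ) : ℂ) * adSTFT σ (g3w g) x t η /
      (2 * (π : ℂ) * Complex.I * adSTFT σ g x t η)

/-- The (real) phase transformation `ω^{adp}` of the adaptive FSST. -/
def omegaAdp (σ : ℝ → ℝ) (g x : ℝ → ℂ) (t η : ℝ) : ℝ :=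
  (adSTFTt σ g x t η / (2 * (π : ℂ) * Complex.I * adSTFT σ g x t η)).re
  + (deriv σ t / σ t) *
      (adSTFT σ (g3w g) x t η / (2 * (π : ℂ) * Complex.I * adSTFT σ g x t η)).re

/-- The quantity `P₀(t,η)` of the second-order adaptive FSST. -/
def P0 (σ : ℝ → ℝ) (g x : ℝ → ℂ) (t η : ℝ) : ℂ :=
  (deriv (fun η' => adSTFTt σ g x t η' / adSTFT σ g x t η') η
    + ((deriv σ t / σ t : ℝ) : ℂ) *
        deriv (fun η' => adSTFT σ (g3w g) x t η' / adSTFT σ g x t η') η)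
  / deriv (fun η' => adSTFT σ (g1w g) x t η' / adSTFT σ g x t η') η

/-- The complex second-order phase transformation `ω^{adp,2nd,c}`. -/
def omega2C (σ : ℝ → ℝ) (g x : ℝ → ℂ) (t η : ℝ) : ℂ :=
  ((deriv σ t : ℝ) : ℂ) / (2 * (π : ℂ) * Complex.I * (σ t : ℂ))
  + adSTFTt σ g x t η / (2 * (π : ℂ) * Complex.I * adSTFT σ g x t η)
  - adSTFT σ (g1w g) x t η / (2 * (π : ℂ) * Complex.I * adSTFT σ g x t η) * P0 σ g x t η
  + ((deriv σ t / σ t : ℝ) : ℂ) * adSTFT σ (g3w g) x t η /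
      (2 * (π : ℂ) * Complex.I * adSTFT σ g x t η)

/-- The (real) second-order phase transformation `ω^{adp,2nd}`. -/
def omega2 (σ : ℝ → ℝ) (g x : ℝ → ℂ) (t η : ℝ) : ℝ := (omega2C σ g x t η).re

/-- The adaptive FSST `R^{adp,λ}_{x,γ}`. -/
def fsst (σ : ℝ → ℝ) (g x : ℝ → ℂ) (h : ℝ → ℝ) (γ lam t ξ : ℝ) : ℂ :=
  ∫ η in {η : ℝ | γ < ‖adSTFT σ g x t η‖},
    adSTFT σ g x t η * ((lam⁻¹ * h ((ξ - omegaAdp σ g x t η) / lam) : ℝ) : ℂ)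

/-- The second-order adaptive FSST `R^{adp,2nd,λ}_{x,γ₁,γ₂}`. -/
def fsst2 (σ : ℝ → ℝ) (g x : ℝ → ℂ) (h : ℝ → ℝ) (γ₁ γ₂ lam t ξ : ℝ) : ℂ :=
  ∫ η in {η : ℝ | γ₁ < ‖adSTFT σ g x t η‖ ∧
      γ₂ < ‖deriv (fun η' => adSTFT σ (g1w g) x t η' / adSTFT σ g x t η') η‖},
    adSTFT σ g x t η * ((lam⁻¹ * h ((ξ - omega2 σ g x t η) / lam) : ℝ) : ℂ)

/-- The chirp kernel `G^w_ℓ(t,η)` associated with linear phase `a` and chirp rate `b`. -/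
def chirpG (σ : ℝ → ℝ) (w : ℝ → ℂ) (a b : ℝ) (t η : ℝ) : ℂ :=
  ∫ τ : ℝ, e2πi (a * τ + b * τ ^ 2 / 2) * ((σ t : ℂ))⁻¹ * w (τ / σ t) * e2πi (-(η * τ))

/-- The Fourier transform of the chirped window `e^{iπru²} w(u)`. -/
def chirpFT (r : ℝ) (w : ℝ → ℂ) (ξ : ℝ) : ℂ :=
  ∫ u : ℝ, e2πi (r * u ^ 2 / 2) * w u * e2πi (-(ξ * u))

/-- The residual `err^w(t,η) = Ṽ^w_x(t,η) - Σ_ℓ x_ℓ(t) G^w_ℓ(t,η)`. -/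
def errW (σ : ℝ → ℝ) (w : ℝ → ℂ) (K : ℕ) (A φ : Fin K → ℝ → ℝ) (x : ℝ → ℂ)
    (t η : ℝ) : ℂ :=
  adSTFT σ w x t η - ∑ ℓ, (A ℓ t : ℂ) * e2πi (φ ℓ t) *
    chirpG σ w (deriv (φ ℓ) t) (deriv (deriv (φ ℓ)) t) t η

/-- The quantity `Err₁` of the second-order analysis. -/
def Err1 (σ : ℝ → ℝ) (g x : ℝ → ℂ) (K : ℕ) (A φ : Fin K → ℝ → ℝ) (k : Fin K)
    (t η : ℝ) : ℂ :=
  2 * (π : ℂ) * Complex.I *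
      (∑ ℓ ∈ Finset.univ.erase k, (A ℓ t : ℂ) * e2πi (φ ℓ t) *
        ((deriv (φ ℓ) t - deriv (φ k) t : ℝ) : ℂ) *
        chirpG σ g (deriv (φ ℓ) t) (deriv (deriv (φ ℓ)) t) t η)
  + 2 * (π : ℂ) * Complex.I * (σ t : ℂ) *
      (∑ ℓ ∈ Finset.univ.erase k, (A ℓ t : ℂ) * e2πi (φ ℓ t) *
        ((deriv (deriv (φ ℓ)) t - deriv (deriv (φ k)) t : ℝ) : ℂ) *
        chirpG σ (g1w g) (deriv (φ ℓ) t) (deriv (deriv (φ ℓ)) t) t η)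
  + 2 * (π : ℂ) * Complex.I * ((η - deriv (φ k) t : ℝ) : ℂ) * errW σ g K A φ x t η
  - errW σ (deriv g) K A φ x t η / (σ t : ℂ)
  - 2 * (π : ℂ) * Complex.I * ((deriv (deriv (φ k)) t : ℝ) : ℂ) * (σ t : ℂ) *
      errW σ (g1w g) K A φ x t η

/-- The quantity `Err₂` of the second-order analysis. -/
def Err2 (σ : ℝ → ℝ) (g x : ℝ → ℂ) (K : ℕ) (A φ : Fin K → ℝ → ℝ) (k : Fin K)
    (t η : ℝ) : ℂ :=
  4 * (π : ℂ) ^ 2 * (σ t : ℂ) *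
      (∑ ℓ ∈ Finset.univ.erase k, (A ℓ t : ℂ) * e2πi (φ ℓ t) *
        ((deriv (φ ℓ) t - deriv (φ k) t : ℝ) : ℂ) *
        chirpG σ (g1w g) (deriv (φ ℓ) t) (deriv (deriv (φ ℓ)) t) t η)
  + 4 * (π : ℂ) ^ 2 * (σ t : ℂ) ^ 2 *
      (∑ ℓ ∈ Finset.univ.erase k, (A ℓ t : ℂ) * e2πi (φ ℓ t) *
        ((deriv (deriv (φ ℓ)) t - deriv (deriv (φ k)) t : ℝ) : ℂ) *
        chirpG σ (g2w g) (deriv (φ ℓ) t) (deriv (deriv (φ ℓ)) t) t η)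
  + 2 * (π : ℂ) * Complex.I * errW σ g K A φ x t η
  + 4 * (π : ℂ) ^ 2 * ((η - deriv (φ k) t : ℝ) : ℂ) * (σ t : ℂ) * errW σ (g1w g) K A φ x t η
  + 2 * (π : ℂ) * Complex.I * errW σ (g3w g) K A φ x t η
  - 4 * (π : ℂ) ^ 2 * ((deriv (deriv (φ k)) t : ℝ) : ℂ) * (σ t : ℂ) ^ 2 *
      errW σ (g2w g) K A φ x t η

/-- The quantity `Err₃` of the second-order analysis. -/
def Err3 (σ : ℝ → ℝ) (g x : ℝ → ℂ) (K : ℕ) (A φ : Fin K → ℝ → ℝ) (k : Fin K)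
    (t η : ℝ) : ℂ :=
  (adSTFT σ g x t η * Err2 σ g x K A φ k t η
    - adSTFTη σ g x t η * Err1 σ g x K A φ k t η)
  / (adSTFT σ g x t η * adSTFTη σ (g1w g) x t η
    - adSTFT σ (g1w g) x t η * adSTFTη σ g x t η)

/-! ### The kernel of the adaptive STFT -/

/-- The integrand of `adSTFT σ w x s η` after the substitution `u = s + τ`, which removes `s` from
the argument of the signal `x`. -/
def stftKernel (σ : ℝ → ℝ) (w x : ℝ → ℂ) (η s u : ℝ) : ℂ :=
  x u * ((σ s : ℂ))⁻¹ * w ((u - s) / σ s) * e2πi (-(η * (u - s)))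

/-- The `s`-derivative of `stftKernel σ g x η s u`. -/
def stftKernelDeriv (σ : ℝ → ℝ) (g x : ℝ → ℂ) (η s u : ℝ) : ℂ :=
  (2 * (π : ℂ) * Complex.I * (η : ℂ) - ((deriv σ s / σ s : ℝ) : ℂ)) * stftKernel σ g x η s u
    - ((deriv σ s / σ s : ℝ) : ℂ) * stftKernel σ (g3w g) x η s u
    - ((σ s : ℂ))⁻¹ * stftKernel σ (deriv g) x η s u

lemma adSTFT_eq_integral_stftKernel (σ : ℝ → ℝ) (w x : ℝ → ℂ) (s η : ℝ) :
    adSTFT σ w x s η = ∫ u, stftKernel σ w x η s u := by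
  rw [← integral_add_left_eq_self (fun u => stftKernel σ w x η s u) s]
  simp only [adSTFT, stftKernel, add_sub_cancel_left]

lemma norm_e2πi (θ : ℝ) : ‖e2πi θ‖ = 1 := by
  have h : 2 * (π : ℂ) * (θ : ℂ) * Complex.I = ((2 * π * θ : ℝ) : ℂ) * Complex.I := by
    push_cast; ring
  rw [e2πi, h, Complex.norm_exp_ofReal_mul_I]

lemma continuous_e2πi : Continuous e2πi := by
  unfold e2πi; fun_prop

/-! ### Decay and integrability -/

/-- Moments of a Schwartz function decay at least like the integrable weight `(1 + v²)⁻¹`. -/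
lemma schwartz_moment_decay (f : SchwartzMap ℝ ℂ) (k : ℕ) :
    ∃ A, ∀ v : ℝ, |v| ^ k * ‖f v‖ ≤ A * (1 + v ^ 2)⁻¹ := by
  obtain ⟨A, -, hA⟩ := f.decay k 0
  obtain ⟨B, -, hB⟩ := f.decay (k + 2) 0
  refine ⟨A + B, fun v => ?_⟩
  have h1 := hA v
  have h2 := hB v
  simp only [norm_iteratedFDeriv_zero, Real.norm_eq_abs] at h1 h2
  rw [← div_eq_mul_inv, le_div_iff₀ (by positivity)]
  rw [pow_add, sq_abs] at h2
  linarith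

/-- Uniform in `s` near `t`, the decay of the window carries over to the kernel with weight centred
at `t`: for `v = (u - s) / σ s` with `|s - t| ≤ 1` and `σ s ≤ M`, one has
`1 + (u - t)² ≤ (3 + 2 M²) (1 + v²)`. -/
lemma norm_stftKernel_le {σ : ℝ → ℝ} {w x : ℝ → ℂ} {η s t C A M R : ℝ}
    (hC : ∀ u, ‖x u‖ ≤ C) (hA : ∀ v, ‖w v‖ ≤ A * (1 + v ^ 2)⁻¹)
    (hσ : 0 < σ s) (hM : σ s ≤ M) (hR : (σ s)⁻¹ ≤ R) (hst : |s - t| ≤ 1) (u : ℝ) :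
    ‖stftKernel σ w x η s u‖ ≤ C * R * A * (3 + 2 * M ^ 2) * (1 + (u - t) ^ 2)⁻¹ := by
  have hC0 : 0 ≤ C := (norm_nonneg _).trans (hC 0)
  have hA0 : 0 ≤ A := by simpa using (norm_nonneg _).trans (hA 0)
  have hR0 : 0 ≤ R := (inv_pos.2 hσ).le.trans hR
  set v := (u - s) / σ s with hv
  have huv : u - s = σ s * v := by rw [hv]; field_simp
  have hweight : (1 + v ^ 2)⁻¹ ≤ (3 + 2 * M ^ 2) * (1 + (u - t) ^ 2)⁻¹ := by
    rw [inv_eq_one_div, ← div_eq_mul_inv, div_le_div_iff₀ (by positivity) (by positivity)]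
    have h1 : (s - t) ^ 2 ≤ 1 := by
      rw [← sq_abs]; exact pow_le_one₀ (abs_nonneg _) hst
    have h2 : (σ s) ^ 2 * v ^ 2 ≤ M ^ 2 * v ^ 2 := by gcongr
    have h3 : (u - t) ^ 2 ≤ 2 * ((σ s) ^ 2 * v ^ 2) + 2 * (s - t) ^ 2 := by
      have : u - t = σ s * v + (s - t) := by rw [← huv]; ring
      rw [this]
      nlinarith [sq_nonneg (σ s * v - (s - t))]
    nlinarith [sq_nonneg v, sq_nonneg M]
  have hn : ‖stftKernel σ w x η s u‖ = ‖x u‖ * (σ s)⁻¹ * ‖w v‖ := by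
    simp only [stftKernel, norm_mul, norm_e2πi, mul_one, norm_inv, Complex.norm_real,
      Real.norm_eq_abs, abs_of_pos hσ, hv]
  calc ‖stftKernel σ w x η s u‖ = ‖x u‖ * (σ s)⁻¹ * ‖w v‖ := hn
    _ ≤ C * R * (A * ((3 + 2 * M ^ 2) * (1 + (u - t) ^ 2)⁻¹)) := by
        gcongr
        · exact hC u
        · exact (hA v).trans (by gcongr)
    _ = _ := by ring

lemma continuous_stftKernel {σ : ℝ → ℝ} {w x : ℝ → ℂ} (hx : Continuous x) (hw : Continuous w)
    (η s : ℝ) : Continuous (stftKernel σ w x η s) := by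
  have := continuous_e2πi
  unfold stftKernel
  fun_prop

lemma integrable_inv_one_add_sub_sq (t : ℝ) :
    Integrable fun u : ℝ => (1 + (u - t) ^ 2)⁻¹ :=
  integrable_inv_one_add_sq.comp_sub_right t

lemma integrable_stftKernel {σ : ℝ → ℝ} {w x : ℝ → ℂ} {C A : ℝ} (hx : Continuous x)
    (hw : Continuous w) (hC : ∀ u, ‖x u‖ ≤ C) (hA : ∀ v, ‖w v‖ ≤ A * (1 + v ^ 2)⁻¹)
    (η : ℝ) {s : ℝ} (hσ : 0 < σ s) : Integrable (stftKernel σ w x η s) :=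
  ((integrable_inv_one_add_sub_sq s).const_mul _).mono'
    (continuous_stftKernel hx hw η s).aestronglyMeasurable
    (Eventually.of_forall
      (norm_stftKernel_le (t := s) hC hA hσ le_rfl le_rfl (by simp)))

/-! ### Differentiation of the kernel and of the integral -/

lemma hasDerivAt_stftKernel {σ : ℝ → ℝ} {g : ℝ → ℂ} (x : ℝ → ℂ) (hg : Differentiable ℝ g)
    {s : ℝ} (hσ : DifferentiableAt ℝ σ s) (hσ0 : σ s ≠ 0) (η u : ℝ) :
    HasDerivAt (fun s => stftKernel σ g x η s u) (stftKernelDeriv σ g x η s u) s := by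
  have hd := hσ.hasDerivAt
  have hlin : HasDerivAt (fun s : ℝ => u - s) (-1) s := by
    simpa using (hasDerivAt_id s).const_sub u
  have hinv : HasDerivAt (fun s => ((σ s : ℂ))⁻¹) (-((deriv σ s : ℝ) : ℂ) / (σ s : ℂ) ^ 2) s :=
    hd.ofReal_comp.inv (by exact_mod_cast hσ0)
  have hwin := (hg ((u - s) / σ s)).hasDerivAt.scomp s (hlin.div hd hσ0)
  have hexp : HasDerivAt (fun s => e2πi (-(η * (u - s))))
      (e2πi (-(η * (u - s))) * (2 * (π : ℂ) * Complex.I * (η : ℂ))) s := by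
    have h1 : HasDerivAt (fun s : ℝ => -(η * (u - s))) η s := by
      exact (hlin.const_mul η).neg.congr_deriv (by ring)
    have h2 := ((h1.ofReal_comp.const_mul (2 * (π : ℂ))).mul_const Complex.I).cexp
    refine h2.congr_deriv ?_
    simp only [e2πi]
    ring
  have h := ((hinv.const_mul (x u)).mul hwin).mul hexp
  refine h.congr_deriv ?_
  have hc : (σ s : ℂ) ≠ 0 := by exact_mod_cast hσ0
  simp only [stftKernelDeriv, stftKernel, g3w, Function.comp, Complex.real_smul, Pi.mul_apply,
    Pi.div_apply]
  push_cast
  field_simp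
  ring

theorem statement8
    (x : ℝ → ℂ) (hxc : Continuous x) (hxb : ∃ C, ∀ s, ‖x s‖ ≤ C)
    (g : SchwartzMap ℝ ℂ)
    (σ : ℝ → ℝ) (hσ : ContDiff ℝ 1 σ) (hσpos : ∀ s, 0 < σ s) :
    ∀ (t η : ℝ),
      HasDerivAt (fun s => adSTFT σ (⇑g) x s η)
        ((2 * (π : ℂ) * Complex.I * (η : ℂ) - ((deriv σ t / σ t : ℝ) : ℂ)) *
            adSTFT σ (⇑g) x t η
          - ((deriv σ t / σ t : ℝ) : ℂ) * adSTFT σ (g3w (⇑g)) x t η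
          - ((σ t : ℂ))⁻¹ * adSTFT σ (deriv (⇑g)) x t η) t := by
  intro t η
  obtain ⟨C, hC⟩ := hxb
  have hσd : Differentiable ℝ σ := hσ.differentiable (by norm_num)
  have hσ'c : Continuous (deriv σ) := hσ.continuous_deriv (by norm_num)
  have hσ0 : ∀ s, σ s ≠ 0 := fun s => ne_of_gt (hσpos s)
  -- `g'` is again Schwartz, so `g`, `g'` and `u g'(u)` all decay like `(1 + v²)⁻¹`.
  have hdg : ∀ v, SchwartzMap.derivCLM ℝ ℂ g v = deriv g v := SchwartzMap.derivCLM_apply ℝ g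
  have hcd : Continuous (deriv g) := by
    have h := (SchwartzMap.derivCLM ℝ ℂ g).continuous
    rwa [funext hdg] at h
  have hc3 : Continuous (g3w g) := by unfold g3w; fun_prop
  obtain ⟨A, hA⟩ : ∃ A, ∀ v, ‖g v‖ ≤ A * (1 + v ^ 2)⁻¹ := by
    simpa using schwartz_moment_decay g 0
  obtain ⟨A', hA'⟩ : ∃ A, ∀ v, ‖deriv g v‖ ≤ A * (1 + v ^ 2)⁻¹ := by
    simpa [hdg] using schwartz_moment_decay (SchwartzMap.derivCLM ℝ ℂ g) 0
  obtain ⟨A₃, hA₃⟩ : ∃ A, ∀ v, ‖g3w g v‖ ≤ A * (1 + v ^ 2)⁻¹ := by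
    simpa [hdg, g3w] using schwartz_moment_decay (SchwartzMap.derivCLM ℝ ℂ g) 1
  have hI := integrable_stftKernel hxc g.continuous hC hA η (hσpos t)
  have hI' := integrable_stftKernel hxc hcd hC hA' η (hσpos t)
  have hI₃ := integrable_stftKernel hxc hc3 hC hA₃ η (hσpos t)
  -- On a neighbourhood of `t`, the quantities `σ`, `1 / σ` and `σ' / σ` are bounded.
  set M := σ t + 1
  set R := (σ t)⁻¹ + 1
  set Q := |deriv σ t / σ t| + 1
  have hnear : ∀ᶠ s in 𝓝 t, σ s ≤ M ∧ (σ s)⁻¹ ≤ R ∧ |deriv σ s / σ s| ≤ Q ∧ |s - t| ≤ 1 := by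
    have e1 := (hσd.continuous.tendsto t).eventually_le_const (lt_add_one (σ t))
    have e2 := ((hσd.continuous.inv₀ hσ0).tendsto t).eventually_le_const (lt_add_one (σ t)⁻¹)
    have e3 := (((hσ'c.div hσd.continuous hσ0).abs).tendsto t).eventually_le_const
      (lt_add_one |deriv σ t / σ t|)
    have e4 : ∀ᶠ s in 𝓝 t, |s - t| ≤ 1 := by
      filter_upwards [Metric.closedBall_mem_nhds t one_pos] with s hs
      simpa [Real.dist_eq] using hs
    filter_upwards [e1, e2, e3, e4] with s h1 h2 h3 h4 using ⟨h1, h2, h3, h4⟩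
  set B : ℝ → ℝ := fun a => C * R * a * (3 + 2 * M ^ 2)
  set P : ℝ := ‖2 * (π : ℂ) * Complex.I * (η : ℂ)‖
  have key := hasDerivAt_integral_of_dominated_loc_of_deriv_le (μ := volume)
    (F := fun s u => stftKernel σ g x η s u) (F' := fun s u => stftKernelDeriv σ g x η s u)
    (bound := fun u => ((P + Q) * B A + Q * B A₃ + R * B A') * (1 + (u - t) ^ 2)⁻¹)
    hnear
    (Eventually.of_forall fun s =>
      (continuous_stftKernel hxc g.continuous η s).aestronglyMeasurable)
    hI
    (((hI.const_mul _).sub (hI₃.const_mul _)).sub (hI'.const_mul _)).aestronglyMeasurable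
    (Eventually.of_forall fun u s ⟨hM, hR, hQ, hst⟩ => by
      have k := norm_stftKernel_le (η := η) hC hA (hσpos s) hM hR hst u
      have k' := norm_stftKernel_le (η := η) hC hA' (hσpos s) hM hR hst u
      have k₃ := norm_stftKernel_le (η := η) hC hA₃ (hσpos s) hM hR hst u
      have hQ' : ‖((deriv σ s / σ s : ℝ) : ℂ)‖ ≤ Q := by
        rwa [Complex.norm_real, Real.norm_eq_abs]
      have hR' : ‖((σ s : ℂ))⁻¹‖ ≤ R := by
        rwa [norm_inv, Complex.norm_real, Real.norm_eq_abs, abs_of_pos (hσpos s)]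
      have hP : ‖2 * (π : ℂ) * Complex.I * (η : ℂ) - ((deriv σ s / σ s : ℝ) : ℂ)‖ ≤ P + Q :=
        (norm_sub_le _ _).trans (by gcongr)
      have b1 := mul_le_mul hP k (norm_nonneg _) ((norm_nonneg _).trans hP)
      have b2 := mul_le_mul hQ' k₃ (norm_nonneg _) ((norm_nonneg _).trans hQ')
      have b3 := mul_le_mul hR' k' (norm_nonneg _) ((norm_nonneg _).trans hR')
      rw [← norm_mul] at b1 b2 b3
      refine (norm_sub_le _ _).trans
        ((add_le_add ((norm_sub_le _ _).trans (add_le_add b1 b2)) b3).trans (le_of_eq ?_))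
      simp only [B]
      ring)
    ((integrable_inv_one_add_sub_sq t).const_mul _)
    (Eventually.of_forall fun u s _ =>
      hasDerivAt_stftKernel x g.differentiable (hσd s) (hσ0 s) η u)
  have hint : ∫ u, stftKernelDeriv σ g x η t u =
      (2 * (π : ℂ) * Complex.I * (η : ℂ) - ((deriv σ t / σ t : ℝ) : ℂ)) * adSTFT σ (⇑g) x t η
        - ((deriv σ t / σ t : ℝ) : ℂ) * adSTFT σ (g3w (⇑g)) x t η
        - ((σ t : ℂ))⁻¹ * adSTFT σ (deriv (⇑g)) x t η := by
    simp only [adSTFT_eq_integral_stftKernel, stftKernelDeriv]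
    refine (integral_sub ((hI.const_mul _).sub (hI₃.const_mul _)) (hI'.const_mul _)).trans ?_
    simp only [Pi.sub_apply]
    rw [integral_sub (hI.const_mul _) (hI₃.const_mul _)]
    simp only [integral_const_mul]
  rw [← hint]
  simp only [adSTFT_eq_integral_stftKernel σ g x]
  exact key.2

end
end

section
/- Let x(t) = A e^{2πict} with A > 0 and c ∈ ℝ, let g be a Schwartz-class window, σ : ℝ → (0,∞) a C¹ function, and Ṽ_x, Ṽ^{g₃}_x the adaptive STFTs as in the context. Then at every (t,η) with Ṽ_x(t,η) ≠ 0, the complex phase transformation ω^{adp,c}_x(t,η) = ∂_t Ṽ_x(t,η)/(2πi Ṽ_x(t,η)) + σ'(t)/(2πi σ(t)) + (σ'(t)/σ(t)) Ṽ^{g₃}_x(t,η)/(2πi Ṽ_x(t,η)) equals c, the instantaneous frequency of x. -/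
/-! For a pure tone `x`, the substitution `τ = σ(t) u` turns the adaptive STFT into an ordinary
Fourier transform: `Ṽ_x(t,η) = x(t) ĝ(ξ)` with `ξ = σ(t) (η - c)`, for every window
(`adSTFT_tone`). Differentiating in `t` gives
`∂_t Ṽ_x = 2πi c Ṽ_x + x(t) σ'(t) (η - c) ĝ'(ξ)`, while the transform of `u g'(u)` is
`-(ĝ(ξ) + ξ ĝ'(ξ))` (`fourier_g3w`). Hence
`∂_t Ṽ_x + (σ'/σ) Ṽ_x + (σ'/σ) Ṽ^{g₃}_x = 2πi c Ṽ_x`, because the terms containing `σ'` cancel;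
dividing by `2πi Ṽ_x` gives the result. -/


open MeasureTheory Real Set Filter
open scoped Topology Real

noncomputable section

lemma e2πi_add (a b : ℝ) : e2πi (a + b) = e2πi a * e2πi b := by
  unfold e2πi
  rw [← Complex.exp_add]
  push_cast
  ring_nf

lemma hasDerivAt_e2πi_mul (c t : ℝ) :
    HasDerivAt (fun s : ℝ => e2πi (c * s)) (2 * π * Complex.I * c * e2πi (c * t)) t := by
  unfold e2πi
  have h : HasDerivAt (fun s : ℝ => 2 * (π : ℂ) * ((c * s : ℝ) : ℂ) * Complex.I)
      (2 * π * Complex.I * c) t := by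
    have h0 : HasDerivAt (fun s : ℝ => (s : ℂ)) 1 t := Complex.ofRealCLM.hasDerivAt
    have h1 := h0.const_mul (2 * π * Complex.I * c)
    rw [mul_one] at h1
    refine h1.congr_of_eventuallyEq (Eventually.of_forall fun s => ?_)
    push_cast
    ring
  convert h.cexp using 1
  ring

open scoped FourierTransform in
/-- The adaptive STFT of a pure tone of frequency `c` is the tone times the Fourier transform of the
window at `σ(t) (η - c)`. No integrability is needed: the change of variables is unconditional. -/
lemma adSTFT_tone (Amp c : ℝ) (x : ℝ → ℂ) (hx : ∀ s, x s = (Amp : ℂ) * e2πi (c * s))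
    (σ : ℝ → ℝ) (hσpos : ∀ s, 0 < σ s) (w : ℝ → ℂ) (t η : ℝ) :
    adSTFT σ w x t η = x t * 𝓕 w (σ t * (η - c)) := by
  have hs := (hσpos t).ne'
  have hsc : (σ t : ℂ) ≠ 0 := by exact_mod_cast hs
  have key : ∀ τ : ℝ, x (t + τ) * ((σ t : ℂ))⁻¹ * w (τ / σ t) * e2πi (-(η * τ)) =
      (fun u : ℝ => (x t * (σ t : ℂ)⁻¹) * (e2πi (-(u * (σ t * (η - c)))) * w u)) (τ / σ t) := by
    intro τ
    have h1 : -(τ / σ t * (σ t * (η - c))) = c * τ + -(η * τ) := by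
      field_simp
      ring
    simp only [hx, h1, mul_add, e2πi_add]
    ring
  unfold adSTFT
  simp_rw [key]
  rw [Measure.integral_comp_div
    (fun u : ℝ => (x t * (σ t : ℂ)⁻¹) * (e2πi (-(u * (σ t * (η - c)))) * w u)) (σ t),
    integral_const_mul, abs_of_pos (hσpos t), Real.fourier_real_eq_integral_exp_smul,
    Complex.real_smul]
  have h2 : ∀ u : ℝ, e2πi (-(u * (σ t * (η - c)))) =
      Complex.exp (↑(-2 * π * u * (σ t * (η - c))) * Complex.I) := by
    intro u
    unfold e2πi
    push_cast
    ring_nf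
  have h3 : (σ t : ℂ) * (x t * (σ t : ℂ)⁻¹) = x t := by field_simp
  simp_rw [h2, smul_eq_mul]
  rw [← mul_assoc, h3]

lemma SchwartzMap.integrable_id_smul (g : SchwartzMap ℝ ℂ) :
    Integrable (fun u : ℝ => u • g u) := by
  have h := g.integrable_pow_mul volume 1
  refine (integrable_norm_iff ?_).1 (by simpa [norm_smul] using h)
  exact (continuous_id.smul g.continuous).aestronglyMeasurable

open scoped FourierTransform in
/-- The Fourier transform of `u g'(u)` is `-(ξ ĝ(ξ))'`: compute the derivative in `ξ` of
`𝓕 g' (ξ) = 2πiξ ĝ(ξ)` in two ways. -/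
lemma fourier_g3w (g : SchwartzMap ℝ ℂ) (ξ : ℝ) :
    𝓕 (g3w (⇑g)) ξ = -(𝓕 (⇑g) ξ + ξ * deriv (𝓕 (⇑g)) ξ) := by
  let g' : SchwartzMap ℝ ℂ := SchwartzMap.derivCLM ℝ ℂ g
  have hg' : (⇑g' : ℝ → ℂ) = deriv (⇑g) := by
    ext u
    simp [g']
  have hd := Real.hasDerivAt_fourier g.integrable g.integrable_id_smul ξ
  have h1 := Real.hasDerivAt_fourier g'.integrable g'.integrable_id_smul ξ
  have hgi : Integrable (deriv (⇑g)) := hg' ▸ g'.integrable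
  rw [hg', Real.fourier_deriv g.integrable g.differentiable hgi] at h1
  have h0 : HasDerivAt (fun s : ℝ => (s : ℂ)) 1 ξ := Complex.ofRealCLM.hasDerivAt
  have h2 := (h0.const_mul (2 * π * Complex.I)).mul hd.differentiableAt.hasDerivAt
  have h3 := h1.unique h2
  have h4 : 𝓕 (fun u : ℝ => (-2 * π * Complex.I * u) • deriv (⇑g) u) ξ =
      (-2 * π * Complex.I) * 𝓕 (g3w (⇑g)) ξ := by
    rw [Real.fourier_real_eq_integral_exp_smul, Real.fourier_real_eq_integral_exp_smul,
      ← integral_const_mul]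
    congr 1
    ext u
    simp only [g3w, smul_eq_mul]
    ring
  rw [h4] at h3
  have hpi : (2 * π * Complex.I : ℂ) ≠ 0 := Complex.two_pi_I_ne_zero
  apply mul_left_cancel₀ hpi
  linear_combination -h3

theorem statement9
    (Amp c : ℝ) (hA : 0 < Amp)
    (x : ℝ → ℂ) (hx : ∀ s, x s = (Amp : ℂ) * e2πi (c * s))
    (g : SchwartzMap ℝ ℂ)
    (σ : ℝ → ℝ) (hσ : ContDiff ℝ 1 σ) (hσpos : ∀ s, 0 < σ s) :
    ∀ (t η : ℝ), adSTFT σ (⇑g) x t η ≠ 0 →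
      omegaC σ (⇑g) x t η = (c : ℂ) := by
  intro t η hV
  have hF := Real.hasDerivAt_fourier g.integrable g.integrable_id_smul (σ t * (η - c))
  have hσd : HasDerivAt σ (deriv σ t) t :=
    (hσ.differentiable (by norm_num) t).hasDerivAt
  have hcomp := hF.differentiableAt.hasDerivAt.scomp t (hσd.mul_const (η - c))
  have hxd : HasDerivAt x (2 * π * Complex.I * c * x t) t := by
    rw [funext hx]
    exact ((hasDerivAt_e2πi_mul c t).const_mul (Amp : ℂ)).congr_deriv (by ring)
  have hVd := (hxd.mul hcomp).deriv
  have hfun : (fun s => adSTFT σ (⇑g) x s η) =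
      x * (FourierTransform.fourier (⇑g) ∘ fun s => σ s * (η - c)) :=
    funext fun s => adSTFT_tone Amp c x hx σ hσpos g s η
  have hsc : (σ t : ℂ) ≠ 0 := by exact_mod_cast (hσpos t).ne'
  unfold omegaC adSTFTt
  rw [hfun, hVd]
  rw [adSTFT_tone Amp c x hx σ hσpos] at hV
  rw [adSTFT_tone Amp c x hx σ hσpos, adSTFT_tone Amp c x hx σ hσpos, fourier_g3w]
  obtain ⟨hxt, hFt⟩ := mul_ne_zero_iff.1 hV
  have hpi : (π : ℂ) ≠ 0 := by exact_mod_cast Real.pi_ne_zero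
  simp only [Function.comp_apply, Complex.real_smul]
  push_cast
  field_simp
  ring

end
end

section
/- Let x(t) = A e^{2πi(ct + rt²/2)} be a linear chirp with A > 0 and c, r ∈ ℝ, let g be a Schwartz-class window, σ : ℝ → (0,∞) a C¹ function, and Ṽ_x, Ṽ^{g₁}_x, Ṽ^{g₃}_x the adaptive STFTs as in the context. Then at every (t,η) with Ṽ_x(t,η) ≠ 0 and ∂_η(Ṽ^{g₁}_x(t,η)/Ṽ_x(t,η)) ≠ 0, the second-order complex phase transformation ω^{adp,2nd,c}_x(t,η) = σ'(t)/(2πiσ(t)) + ∂_tṼ_x/(2πiṼ_x) − (Ṽ^{g₁}_x/(2πiṼ_x)) P₀(t,η) + (σ'(t)/σ(t)) Ṽ^{g₃}_x/(2πiṼ_x) equals c + rt, the instantaneous frequency of x, where P₀(t,η) = [∂_η(∂_tṼ_x/Ṽ_x) + (σ'(t)/σ(t)) ∂_η(Ṽ^{g₃}_x/Ṽ_x)] / ∂_η(Ṽ^{g₁}_x/Ṽ_x). -/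
/-!
Differentiating `σ(t)⁻¹ g(τ/σ(t))` in `t` produces only windows of the form `g` and `u g'(u)`, while
a linear chirp satisfies `x'(s) = 2πi (c + r s) x(s)`. Differentiating the adaptive STFT under the
integral sign (`hasDerivAt_adSTFT`) therefore gives, for every `η`,
`∂ₜV = 2πi (c + r t) V + 2πi r σ V^{g₁} - (σ'/σ) V - (σ'/σ) V^{g₃}`.
Dividing by `V` and differentiating in `η` (all the transforms are differentiable in `η`, by
`differentiableAt_adSTFT_freq`) the constants disappear and `P₀ = 2πi r σ`; substituting this back,
everything but `c + r t` cancels.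

Both differentiations are dominated by an integrable function because the windows involved decay
faster than any power, locally uniformly in the scale `σ(s)` (`norm_stftKer_le`).
-/

open MeasureTheory Real Set Filter
open scoped Topology Real

noncomputable section

/-- A continuous window decaying faster than every power. Unlike the Schwartz condition it asks
nothing of derivatives. -/
def RapidDecay (w : ℝ → ℂ) : Prop :=
  Continuous w ∧ ∀ k : ℕ, ∃ C : ℝ, ∀ v : ℝ, |v| ^ k * ‖w v‖ ≤ C

lemma RapidDecay.g1w {w : ℝ → ℂ} (hw : RapidDecay w) : RapidDecay (g1w w) := by
  refine ⟨Complex.continuous_ofReal.mul hw.1, fun k => ?_⟩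
  obtain ⟨C, hC⟩ := hw.2 (k + 1)
  refine ⟨C, fun v => ?_⟩
  have := hC v
  simp only [_root_.g1w, norm_mul, Complex.norm_real, Real.norm_eq_abs]
  rwa [← mul_assoc, ← pow_succ]

lemma rapidDecay_schwartz (g : SchwartzMap ℝ ℂ) : RapidDecay (⇑g) := by
  refine ⟨g.continuous, fun k => ?_⟩
  obtain ⟨C, hC⟩ := g.decay k 0
  refine ⟨C, fun v => ?_⟩
  have := hC.2 v
  simpa using this

lemma rapidDecay_g3w (g : SchwartzMap ℝ ℂ) : RapidDecay (g3w (⇑g)) :=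
  (rapidDecay_schwartz (SchwartzMap.derivCLM ℝ ℂ g)).g1w

lemma RapidDecay.bound {w : ℝ → ℂ} (hw : RapidDecay w) :
    ∃ C : ℝ, 0 ≤ C ∧ ∀ v : ℝ, ‖w v‖ ≤ C * (1 + v ^ 2)⁻¹ := by
  obtain ⟨C, hC⟩ := hw.2 0
  obtain ⟨D, hD⟩ := hw.2 2
  have h : ∀ v : ℝ, ‖w v‖ * (1 + v ^ 2) ≤ C + D := fun v => by
    have h1 := hC v
    have h2 := hD v
    rw [sq_abs] at h2
    simp only [pow_zero, one_mul] at h1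
    linarith
  refine ⟨C + D, le_trans (by positivity) (h 0), fun v => ?_⟩
  rw [← div_eq_mul_inv, le_div_iff₀ (by positivity)]
  exact h v

lemma HasDerivAt.e2πi {f : ℝ → ℝ} {f' t : ℝ} (hf : HasDerivAt f f' t) :
    HasDerivAt (fun s => e2πi (f s)) (2 * (π : ℂ) * Complex.I * (f' : ℂ) * e2πi (f t)) t := by
  have h := ((hf.ofReal_comp.const_mul (2 * (π : ℂ))).mul_const Complex.I).cexp
  refine h.congr_deriv ?_
  simp only [_root_.e2πi]; ring

/-- The integrand of `adSTFT`. -/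
def stftKer (σ : ℝ → ℝ) (w x : ℝ → ℂ) (η s τ : ℝ) : ℂ :=
  x (s + τ) * ((σ s : ℂ))⁻¹ * w (τ / σ s) * e2πi (-(η * τ))

lemma continuous_stftKer {σ : ℝ → ℝ} {w x : ℝ → ℂ} (hx : Continuous x) (hw : RapidDecay w)
    (η s : ℝ) : Continuous (stftKer σ w x η s) := by
  have h1 := hw.1
  have h2 := continuous_e2πi
  unfold stftKer
  fun_prop

/-- Domination of the integrand, uniform over frequencies and over times whose scale `σ s` lies in
`[m, M]`. -/
lemma norm_stftKer_le {σ : ℝ → ℝ} {w x : ℝ → ℂ} {Amp : ℝ} (hx : ∀ s, ‖x s‖ ≤ Amp)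
    (hw : RapidDecay w) {m M : ℝ} (hm : 0 < m) :
    ∃ C : ℝ, 0 ≤ C ∧ ∀ η s τ : ℝ, m ≤ σ s → σ s ≤ M →
      ‖stftKer σ w x η s τ‖ ≤ C * (1 + (M⁻¹ * τ) ^ 2)⁻¹ := by
  obtain ⟨C, hC0, hC⟩ := hw.bound
  have hA : 0 ≤ Amp := le_trans (norm_nonneg _) (hx 0)
  refine ⟨Amp * m⁻¹ * C, by positivity, fun η s τ h1 h2 => ?_⟩
  have hs : 0 < σ s := hm.trans_le h1
  have hM : 0 < M := hs.trans_le h2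
  have hsq : (M⁻¹ * τ) ^ 2 ≤ (τ / σ s) ^ 2 := by
    rw [div_eq_inv_mul, mul_pow, mul_pow]
    gcongr
  have hw' : ‖w (τ / σ s)‖ ≤ C * (1 + (M⁻¹ * τ) ^ 2)⁻¹ := by
    refine (hC _).trans ?_
    gcongr
  have hinv : ‖((σ s : ℂ))⁻¹‖ ≤ m⁻¹ := by
    rw [norm_inv, Complex.norm_real, Real.norm_of_nonneg hs.le]
    gcongr
  rw [stftKer, norm_mul, norm_mul, norm_mul, norm_e2πi, mul_one, mul_assoc (Amp * m⁻¹)]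
  gcongr
  exact hx _

lemma integrable_stftBound {M : ℝ} (hM : 0 < M) :
    Integrable (fun τ : ℝ => (1 + (M⁻¹ * τ) ^ 2)⁻¹) :=
  integrable_inv_one_add_sq.comp_mul_left' (inv_pos.2 hM).ne'

lemma integrable_stftKer {σ : ℝ → ℝ} {w x : ℝ → ℂ} {Amp : ℝ} (hxc : Continuous x)
    (hx : ∀ s, ‖x s‖ ≤ Amp) (hw : RapidDecay w) (η : ℝ) {s : ℝ} (hs : 0 < σ s) :
    Integrable (stftKer σ w x η s) := by
  obtain ⟨C, -, hC⟩ := norm_stftKer_le (σ := σ) (M := σ s) hx hw hs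
  exact ((integrable_stftBound hs).const_mul C).mono'
    (continuous_stftKer hxc hw η s).aestronglyMeasurable
    (Eventually.of_forall fun τ => hC η s τ le_rfl le_rfl)

lemma differentiableAt_adSTFT_freq {σ : ℝ → ℝ} {w x : ℝ → ℂ} {Amp : ℝ} (hxc : Continuous x)
    (hx : ∀ s, ‖x s‖ ≤ Amp) (hw : RapidDecay w) {t : ℝ} (ht : 0 < σ t) (η : ℝ) :
    DifferentiableAt ℝ (fun η' => adSTFT σ w x t η') η := by
  obtain ⟨C, -, hC⟩ := norm_stftKer_le (σ := σ) (M := σ t) hx hw.g1w ht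
  have hσ0 : (σ t : ℂ) ≠ 0 := Complex.ofReal_ne_zero.2 (ne_of_gt ht)
  -- multiplying by `τ` replaces the window `w` by `σ · g1w w`
  set a : ℂ := -(2 * (π : ℂ) * Complex.I * (σ t : ℂ)) with ha
  refine (hasDerivAt_integral_of_dominated_loc_of_deriv_le
    (F := fun η' τ => stftKer σ w x η' t τ)
    (F' := fun η' τ => a * stftKer σ (g1w w) x η' t τ)
    (bound := fun τ => ‖a‖ * (C * (1 + ((σ t)⁻¹ * τ) ^ 2)⁻¹))
    (s := univ) univ_mem
    (Eventually.of_forall fun η' => (continuous_stftKer hxc hw η' t).aestronglyMeasurable)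
    (integrable_stftKer hxc hx hw η ht)
    ((continuous_stftKer hxc hw.g1w η t).const_smul a).aestronglyMeasurable
    (Eventually.of_forall fun τ η' _ => ?_)
    (((integrable_stftBound ht).const_mul C).const_mul ‖a‖)
    (Eventually.of_forall fun τ η' _ => ?_)).2.differentiableAt
  · rw [norm_mul]
    gcongr
    exact hC η' t τ le_rfl le_rfl
  · have h1 : HasDerivAt (fun y : ℝ => -(y * τ)) (-τ) η' := by
      simpa using ((hasDerivAt_id η').mul_const τ).fun_neg
    refine (h1.e2πi.const_mul (x (t + τ) * ((σ t : ℂ))⁻¹ * w (τ / σ t))).congr_deriv ?_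
    simp only [stftKer, g1w, ha]
    push_cast
    field_simp

/-- The `t`-derivative of the adaptive STFT of a linear chirp. -/
lemma hasDerivAt_adSTFT {c r Amp : ℝ} {x : ℝ → ℂ} (hxc : Continuous x)
    (hx : ∀ s, ‖x s‖ ≤ Amp)
    (hx' : ∀ s, HasDerivAt x (2 * (π : ℂ) * Complex.I * ((c + r * s : ℝ) : ℂ) * x s) s)
    (g : SchwartzMap ℝ ℂ) {σ : ℝ → ℝ} (hσ : ContDiff ℝ 1 σ) (hσpos : ∀ s, 0 < σ s) (t η : ℝ) :
    HasDerivAt (fun s => adSTFT σ (⇑g) x s η)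
      ((2 * (π : ℂ) * Complex.I * ((c + r * t : ℝ) : ℂ) - ((deriv σ t / σ t : ℝ) : ℂ))
          * adSTFT σ (⇑g) x t η
        + 2 * (π : ℂ) * Complex.I * ((r * σ t : ℝ) : ℂ) * adSTFT σ (g1w (⇑g)) x t η
        - ((deriv σ t / σ t : ℝ) : ℂ) * adSTFT σ (g3w (⇑g)) x t η) t := by
  have hg := rapidDecay_schwartz g
  have hg1 := hg.g1w
  have hg3 := rapidDecay_g3w g
  have hσc : Continuous σ := hσ.continuous
  have hσ'c : Continuous (deriv σ) := hσ.continuous_deriv le_rfl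
  have hquot : Continuous fun s => deriv σ s / σ s :=
    hσ'c.div hσc fun s => (hσpos s).ne'
  set a : ℝ → ℂ := fun s => 2 * (π : ℂ) * Complex.I * ((c + r * s : ℝ) : ℂ)
    - ((deriv σ s / σ s : ℝ) : ℂ) with ha
  set b : ℝ → ℂ := fun s => 2 * (π : ℂ) * Complex.I * ((r * σ s : ℝ) : ℂ) with hb
  set d : ℝ → ℂ := fun s => ((deriv σ s / σ s : ℝ) : ℂ) with hd
  have hdc : Continuous d := Complex.continuous_ofReal.comp hquot
  have hac : Continuous a := by
    refine Continuous.sub ?_ hdc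
    fun_prop
  have hbc : Continuous b := by fun_prop
  have hm : 0 < σ t / 2 := half_pos (hσpos t)
  have hM : 0 < 2 * σ t := by linarith
  obtain ⟨C₀, hC₀p, hC₀⟩ := norm_stftKer_le (σ := σ) (M := 2 * σ t) hx hg hm
  obtain ⟨C₁, hC₁p, hC₁⟩ := norm_stftKer_le (σ := σ) (M := 2 * σ t) hx hg1 hm
  obtain ⟨C₃, hC₃p, hC₃⟩ := norm_stftKer_le (σ := σ) (M := 2 * σ t) hx hg3 hm
  have hloc : ∀ f : ℝ → ℂ, Continuous f → ∀ᶠ s in 𝓝 t, ‖f s‖ ≤ ‖f t‖ + 1 := fun f hf =>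
    (hf.norm.continuousAt.eventually_lt continuousAt_const (lt_add_one ‖f t‖)).mono
      fun s hs => hs.le
  have hnhds : ∀ᶠ s in 𝓝 t, σ t / 2 ≤ σ s ∧ σ s ≤ 2 * σ t ∧
      ‖a s‖ ≤ ‖a t‖ + 1 ∧ ‖b s‖ ≤ ‖b t‖ + 1 ∧ ‖d s‖ ≤ ‖d t‖ + 1 := by
    have e1 : ∀ᶠ s in 𝓝 t, σ t / 2 < σ s :=
      hσc.continuousAt.eventually_const_lt (by linarith [hσpos t])
    have e2 : ∀ᶠ s in 𝓝 t, σ s < 2 * σ t :=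
      hσc.continuousAt.eventually_lt_const (by linarith [hσpos t])
    filter_upwards [e1, e2, hloc a hac, hloc b hbc, hloc d hdc] with s h1 h2 h3 h4 h5
    exact ⟨h1.le, h2.le, h3, h4, h5⟩
  have i0 := integrable_stftKer hxc hx hg η (hσpos t)
  have i1 := integrable_stftKer hxc hx hg1 η (hσpos t)
  have i3 := integrable_stftKer hxc hx hg3 η (hσpos t)
  have key := (hasDerivAt_integral_of_dominated_loc_of_deriv_le
    (μ := volume) (x₀ := t)
    (F := fun s τ => stftKer σ (⇑g) x η s τ)
    (F' := fun s τ => a s * stftKer σ (⇑g) x η s τ + b s * stftKer σ (g1w (⇑g)) x η s τ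
      - d s * stftKer σ (g3w (⇑g)) x η s τ)
    (bound := fun τ => ((‖a t‖ + 1) * C₀ + (‖b t‖ + 1) * C₁ + (‖d t‖ + 1) * C₃)
      * (1 + ((2 * σ t)⁻¹ * τ) ^ 2)⁻¹)
    hnhds
    (Eventually.of_forall fun s => (continuous_stftKer hxc hg η s).aestronglyMeasurable)
    i0
    (((i0.const_mul (a t)).add (i1.const_mul (b t))).sub
      (i3.const_mul (d t))).aestronglyMeasurable
    (Eventually.of_forall fun τ s hs => ?_)
    ((integrable_stftBound hM).const_mul _)
    (Eventually.of_forall fun τ s _ => ?_)).2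
  · refine key.congr_deriv ?_
    have i01 : Integrable fun τ => a t * stftKer σ (⇑g) x η t τ
        + b t * stftKer σ (g1w (⇑g)) x η t τ := (i0.const_mul (a t)).add (i1.const_mul (b t))
    rw [integral_sub i01 (i3.const_mul (d t)),
      integral_add (i0.const_mul (a t)) (i1.const_mul (b t)), integral_const_mul,
      integral_const_mul, integral_const_mul]
    rfl
  · obtain ⟨h1, h2, h3, h4, h5⟩ := hs
    have hmul : ∀ {p q : ℂ} {P Q : ℝ}, ‖p‖ ≤ P → ‖q‖ ≤ Q → ‖p * q‖ ≤ P * Q := by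
      intro p q P Q hp hq
      rw [norm_mul]
      exact mul_le_mul hp hq (norm_nonneg _) ((norm_nonneg _).trans hp)
    have n0 := hmul h3 (hC₀ η s τ h1 h2)
    have n1 := hmul h4 (hC₁ η s τ h1 h2)
    have n3 := hmul h5 (hC₃ η s τ h1 h2)
    exact (norm_sub_le_of_le (norm_add_le_of_le n0 n1) n3).trans_eq (by ring)
  · have hs0 : (σ s : ℂ) ≠ 0 := by exact_mod_cast (hσpos s).ne'
    have hσ' : HasDerivAt σ (deriv σ s) s :=
      ((hσ.differentiable one_ne_zero) s).hasDerivAt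
    have d1 : HasDerivAt (fun y => x (y + τ)) _ s := (hx' (s + τ)).comp_add_const s τ
    have d2 : HasDerivAt (fun y => ((σ y : ℂ))⁻¹) _ s := hσ'.ofReal_comp.fun_inv hs0
    have d3 : HasDerivAt (fun y => τ / σ y) _ s :=
      (hasDerivAt_const s τ).fun_div hσ' (hσpos s).ne'
    have d4 : HasDerivAt (fun y => g (τ / σ y)) _ s :=
      HasDerivAt.scomp s (g.differentiableAt (x := τ / σ s)).hasDerivAt d3
    refine (((d1.fun_mul d2).fun_mul d4).mul_const (e2πi (-(η * τ)))).congr_deriv ?_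
    simp only [ha, hb, hd, stftKer, g1w, g3w, Complex.real_smul]
    push_cast
    field_simp
    ring

theorem statement10
    (Amp c r : ℝ) (hA : 0 < Amp)
    (x : ℝ → ℂ) (hx : ∀ s, x s = (Amp : ℂ) * e2πi (c * s + r * s ^ 2 / 2))
    (g : SchwartzMap ℝ ℂ)
    (σ : ℝ → ℝ) (hσ : ContDiff ℝ 1 σ) (hσpos : ∀ s, 0 < σ s) :
    ∀ (t η : ℝ), adSTFT σ (⇑g) x t η ≠ 0 →
      deriv (fun η' => adSTFT σ (g1w (⇑g)) x t η' / adSTFT σ (⇑g) x t η') η ≠ 0 →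
      omega2C σ (⇑g) x t η = ((c + r * t : ℝ) : ℂ) := by
  intro t η hV hD
  have hxn : ∀ s, ‖x s‖ ≤ Amp := fun s => by
    rw [hx, norm_mul, norm_e2πi, Complex.norm_real, Real.norm_of_nonneg hA.le, mul_one]
  have hx' : ∀ s, HasDerivAt x (2 * (π : ℂ) * Complex.I * ((c + r * s : ℝ) : ℂ) * x s) s := by
    intro s
    have h1 : HasDerivAt (fun s : ℝ => c * s + r * s ^ 2 / 2) (c + r * s) s := by
      refine (((hasDerivAt_id s).const_mul c).add
        ((((hasDerivAt_id s).pow 2).const_mul r).div_const 2)).congr_deriv ?_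
      simp only [id]
      norm_num
      ring
    rw [funext hx]
    refine (h1.e2πi.const_mul (Amp : ℂ)).congr_deriv ?_
    ring
  have hxc : Continuous x := continuous_iff_continuousAt.2 fun s => (hx' s).continuousAt
  have hg := rapidDecay_schwartz g
  have hVt : ∀ η', adSTFTt σ (⇑g) x t η' = _ := fun η' =>
    (hasDerivAt_adSTFT hxc hxn hx' g hσ hσpos t η').deriv
  have dV := differentiableAt_adSTFT_freq hxc hxn hg (hσpos t) η
  have dV1 := differentiableAt_adSTFT_freq hxc hxn hg.g1w (hσpos t) η
  have dV3 := differentiableAt_adSTFT_freq hxc hxn (rapidDecay_g3w g) (hσpos t) η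
  have dq1 := (dV1.fun_div dV hV).hasDerivAt
  have dq3 := (dV3.fun_div dV hV).hasDerivAt
  have hev : (fun η' => adSTFTt σ (⇑g) x t η' / adSTFT σ (⇑g) x t η') =ᶠ[𝓝 η]
      fun η' => (2 * (π : ℂ) * Complex.I * ((c + r * t : ℝ) : ℂ) - ((deriv σ t / σ t : ℝ) : ℂ))
        + 2 * (π : ℂ) * Complex.I * ((r * σ t : ℝ) : ℂ)
          * (adSTFT σ (g1w (⇑g)) x t η' / adSTFT σ (⇑g) x t η')
        - ((deriv σ t / σ t : ℝ) : ℂ)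
          * (adSTFT σ (g3w (⇑g)) x t η' / adSTFT σ (⇑g) x t η') := by
    filter_upwards [dV.continuousAt.eventually_ne hV] with η' h
    rw [hVt]
    field_simp
  have hderiv := hev.deriv_eq.trans
    (((dq1.const_mul (2 * (π : ℂ) * Complex.I * ((r * σ t : ℝ) : ℂ))).const_add
      (2 * (π : ℂ) * Complex.I * ((c + r * t : ℝ) : ℂ) - ((deriv σ t / σ t : ℝ) : ℂ))).sub
      (dq3.const_mul ((deriv σ t / σ t : ℝ) : ℂ))).deriv
  have hP : P0 σ (⇑g) x t η = 2 * (π : ℂ) * Complex.I * ((r * σ t : ℝ) : ℂ) := by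
    rw [P0, hderiv, sub_add_cancel, mul_div_cancel_right₀ _ hD]
  have hs0 : (σ t : ℂ) ≠ 0 := by exact_mod_cast (hσpos t).ne'
  have hπ : (π : ℂ) ≠ 0 := by exact_mod_cast Real.pi_ne_zero
  have hI := Complex.I_ne_zero
  rw [omega2C, hP, hVt]
  push_cast
  field_simp
  ring

end
end

section
/- Let x(t) = Σ_{k=1}^K A_k(t) e^{2πi φ_k(t)} satisfy: A_k ∈ C²(ℝ) ∩ L^∞(ℝ), φ_k ∈ C³(ℝ) with φ''_k ∈ L^∞(ℝ), A_k(t) > 0, 0 < inf_t φ'_k(t) ≤ sup_t φ'_k(t) < ∞, |A'_k(t)| ≤ ε₁ and |φ'''_k(t)| ≤ ε₃ for all t, k. Let g, σ, Ṽ_x be as in the context and for each k set G_k(ξ) = ∫_ℝ e^{iπ φ''_k(t) σ(t)² u²} g(u) e^{−2πiξu} du. Then for all (t,η), |Ṽ_x(t,η) − Σ_{k=1}^K x_k(t) G_k(σ(t)(η − φ'_k(t)))| ≤ σ(t) Π₀(t), where Π₀(t) = K ε₁ I₁ + (π/3) ε₃ I₃ σ(t)² Σ_{k=1}^K A_k(t)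 and I_n = ∫_ℝ |τ^n g(τ)| dτ. -/
/-!
The substitution `τ = σ(t) u` turns the adaptive STFT into
`∫ x(t + σ(t) u) g(u) e^{-2πi η σ(t) u} du`, so the difference to be bounded is a sum over `k` of
integrals against `g` of
`A_k(t + h) e^{2πi φ_k(t + h)} - A_k(t) e^{2πi (φ_k(t) + φ_k'(t) h + φ_k''(t) h² / 2)}`, times a
unimodular factor, where `h = σ(t) u`.
Since `|A_k'| ≤ ε₁`, replacing `A_k(t + h)` by `A_k(t)` costs at most `ε₁ |h|`. Since
`|φ_k'''| ≤ ε₃`, the second-order Taylor remainder of the phase is at most `ε₃ |h|³ / 6`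
(`abs_taylor_two_le`), and `θ ↦ e^{2πiθ}` is `2π`-Lipschitz (`norm_e2πi_sub_le`), so replacing the
phase costs at most `A_k(t) (π / 3) ε₃ |h|³`. Integrating these bounds against `|g|` produces the
moments `I₁` and `I₃`.
-/

open MeasureTheory Real Set Filter
open scoped Topology Real

noncomputable section

lemma norm_e2πi_sub_le (a b : ℝ) : ‖e2πi a - e2πi b‖ ≤ 2 * π * |a - b| := by
  have h1 : e2πi a - e2πi b = e2πi b * (e2πi (a - b) - 1) := by
    rw [mul_sub, ← e2πi_add, mul_one, add_sub_cancel]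
  have h2 : e2πi (a - b) = Complex.exp (Complex.I * ((2 * π * (a - b) : ℝ) : ℂ)) := by
    rw [e2πi]
    congr 1
    push_cast
    ring
  rw [h1, norm_mul, norm_e2πi, one_mul, h2]
  refine (Real.norm_exp_I_mul_ofReal_sub_one_le).trans ?_
  rw [Real.norm_eq_abs, abs_mul, abs_of_pos Real.two_pi_pos]

/-- A bound `C |h|ⁿ` on the derivative of a function vanishing at `0` integrates to the bound
`C |h|ⁿ⁺¹ / (n + 1)` on the function, on both sides of `0`. -/
lemma abs_le_of_abs_deriv_le_pow {r q : ℝ → ℝ} (hr : ∀ h, HasDerivAt r (q h) h) (h0 : r 0 = 0)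
    (n : ℕ) (C : ℝ) (hq : ∀ h, |q h| ≤ C * |h| ^ n) (h : ℝ) :
    |r h| ≤ C / (n + 1) * |h| ^ (n + 1) := by
  have key : ∀ {r q : ℝ → ℝ}, (∀ h, HasDerivAt r (q h) h) → r 0 = 0 →
      (∀ h, |q h| ≤ C * |h| ^ n) → ∀ h, 0 ≤ h → |r h| ≤ C / (n + 1) * h ^ (n + 1) := by
    intro r q hr h0 hq h hh
    have hB : ∀ y : ℝ, HasDerivAt (fun y => C / (n + 1) * y ^ (n + 1)) (C * y ^ n) y := by
      intro y
      refine ((hasDerivAt_pow (n + 1) y).const_mul (C / ((n : ℝ) + 1))).congr_deriv ?_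
      rw [Nat.add_sub_cancel]
      push_cast
      field_simp
    refine image_norm_le_of_norm_deriv_right_le_deriv_boundary (a := 0) (b := h)
      (f := r) (f' := q) (fun y _ => (hr y).continuousAt.continuousWithinAt)
      (fun y _ => (hr y).hasDerivWithinAt) (by simp [h0]) hB ?_ ⟨hh, le_rfl⟩
    intro y hy
    simpa [abs_of_nonneg hy.1] using hq y
  rcases le_total 0 h with hh | hh
  · simpa [abs_of_nonneg hh] using key hr h0 hq h hh
  · have hr' : ∀ y, HasDerivAt (fun y => r (-y)) (-q (-y)) y := fun y =>
      ((hr (-y)).comp y (hasDerivAt_neg y)).congr_deriv (by ring)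
    have := key hr' (by simpa using h0) (fun y => by simpa using hq (-y)) (-h) (by linarith)
    simpa [abs_of_nonpos hh] using this

lemma abs_taylor_zero_le {f : ℝ → ℝ} (hf : ContDiff ℝ 1 f) {M : ℝ}
    (hM : ∀ s, |deriv f s| ≤ M) (t h : ℝ) : |f (t + h) - f t| ≤ M * |h| := by
  have hd : ∀ y, HasDerivAt (fun y => f (t + y) - f t) (deriv f (t + y)) y := fun y =>
    (((hf.differentiable one_ne_zero (t + y)).hasDerivAt).comp_const_add t y).sub_const _
  simpa using abs_le_of_abs_deriv_le_pow hd (by simp) 0 M (fun y => by simpa using hM (t + y)) h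

/-- Two-sided second-order Taylor estimate with the sharp constant `1 / 6`. -/
lemma abs_taylor_two_le {f : ℝ → ℝ} (hf : ContDiff ℝ 3 f) {M : ℝ}
    (hM : ∀ s, |deriv (deriv (deriv f)) s| ≤ M) (t h : ℝ) :
    |f (t + h) - (f t + deriv f t * h + deriv (deriv f) t * h ^ 2 / 2)| ≤ M / 6 * |h| ^ 3 := by
  have hf1 : ContDiff ℝ 2 (deriv f) := hf.deriv' (n := 2)
  have hf2 : ContDiff ℝ 1 (deriv (deriv f)) := hf1.deriv' (n := 1)
  have b2 := abs_taylor_zero_le hf2 hM t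
  have d1 : ∀ y, HasDerivAt (fun y => deriv f (t + y) - deriv f t - deriv (deriv f) t * y)
      (deriv (deriv f) (t + y) - deriv (deriv f) t) y := fun y => by
    have h1 := ((hf1.differentiable two_ne_zero (t + y)).hasDerivAt).comp_const_add t y
    exact ((h1.sub_const (deriv f t)).sub
      ((hasDerivAt_id y).const_mul (deriv (deriv f) t))).congr_deriv (by ring)
  have b1 := abs_le_of_abs_deriv_le_pow d1 (by simp) 1 M (fun y => by simpa using b2 y)
  have d0 : ∀ y, HasDerivAt
      (fun y => f (t + y) - (f t + deriv f t * y + deriv (deriv f) t * y ^ 2 / 2))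
      (deriv f (t + y) - deriv f t - deriv (deriv f) t * y) y := fun y => by
    have h1 := ((hf.differentiable three_ne_zero (t + y)).hasDerivAt).comp_const_add t y
    have h2 := (((hasDerivAt_id y).const_mul (deriv f t)).const_add (f t)).add
      (((hasDerivAt_pow 2 y).const_mul (deriv (deriv f) t)).div_const 2)
    refine (h1.sub h2).congr_deriv ?_
    norm_num
    ring
  have b0 := abs_le_of_abs_deriv_le_pow d0 (by simp) 2 _ b1 h
  refine b0.trans (le_of_eq ?_)
  push_cast
  ring

/-- Bounded continuous multiples of a Schwartz function are integrable. -/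
lemma integrable_bdd_mul_schwartz (g : SchwartzMap ℝ ℂ) {f : ℝ → ℂ} (hf : Continuous f) {C : ℝ}
    (hC : ∀ u, ‖f u‖ ≤ C) : Integrable (fun u => f u * g u) :=
  g.integrable.bdd_mul hf.aestronglyMeasurable (Eventually.of_forall hC)

lemma adSTFT_eq_integral_comp {σ : ℝ → ℝ} (w x : ℝ → ℂ) {t : ℝ} (ht : 0 < σ t) (η : ℝ) :
    adSTFT σ w x t η = ∫ u : ℝ, x (t + σ t * u) * w u * e2πi (-(η * (σ t * u))) := by
  have hne : σ t ≠ 0 := ht.ne'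
  have h := Measure.integral_comp_div
    (fun u : ℝ => x (t + σ t * u) * w u * e2πi (-(η * (σ t * u)))) (σ t)
  rw [abs_of_pos ht, ← inv_smul_eq_iff₀ hne, ← integral_smul] at h
  rw [← h, adSTFT]
  congr 1 with τ
  rw [mul_div_cancel₀ _ hne, Complex.real_smul]
  push_cast
  ring

/-- Replacing a modulated amplitude by its local chirp approximation: the amplitude contributes
a first-order error, the phase a third-order one. -/
lemma norm_modulated_sub_chirp_le {a p : ℝ → ℝ} {ε₁ ε₃ : ℝ} (ha : ContDiff ℝ 1 a)
    (hp : ContDiff ℝ 3 p) (hpos : ∀ s, 0 < a s) (ha' : ∀ s, |deriv a s| ≤ ε₁)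
    (hp' : ∀ s, |deriv (deriv (deriv p)) s| ≤ ε₃) (t h : ℝ) :
    ‖(a (t + h) : ℂ) * e2πi (p (t + h)) -
      (a t : ℂ) * e2πi (p t + deriv p t * h + deriv (deriv p) t * h ^ 2 / 2)‖
      ≤ ε₁ * |h| + a t * (π / 3 * ε₃ * |h| ^ 3) := by
  set P := p t + deriv p t * h + deriv (deriv p) t * h ^ 2 / 2
  have h1 : (a (t + h) : ℂ) * e2πi (p (t + h)) - (a t : ℂ) * e2πi P =
      ((a (t + h) - a t : ℝ) : ℂ) * e2πi (p (t + h)) +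
        (a t : ℂ) * (e2πi (p (t + h)) - e2πi P) := by
    push_cast; ring
  rw [h1]
  refine (norm_add_le _ _).trans (add_le_add ?_ ?_)
  · rw [norm_mul, norm_e2πi, mul_one, Complex.norm_real, Real.norm_eq_abs]
    exact abs_taylor_zero_le ha ha' t h
  · rw [norm_mul, Complex.norm_real, Real.norm_eq_abs, abs_of_pos (hpos t)]
    refine mul_le_mul_of_nonneg_left ?_ (hpos t).le
    refine (norm_e2πi_sub_le _ _).trans ?_
    have := mul_le_mul_of_nonneg_left (abs_taylor_two_le hp hp' t h) Real.two_pi_pos.le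
    refine this.trans (le_of_eq ?_)
    ring

theorem statement11
    (K : ℕ) (hK : 0 < K)
    (A φ : Fin K → ℝ → ℝ) (ε₁ ε₃ : ℝ) (hε₁ : 0 < ε₁) (hε₃pos : 0 < ε₃)
    (hA2 : ∀ k, ContDiff ℝ 2 (A k))
    (hAbdd : ∀ k, ∃ C, ∀ s, |A k s| ≤ C)
    (hφ3 : ∀ k, ContDiff ℝ 3 (φ k))
    (hφ''bdd : ∀ k, ∃ C, ∀ s, |deriv (deriv (φ k)) s| ≤ C)
    (hApos : ∀ k s, 0 < A k s)
    (hφ'bd : ∀ k, ∃ c C : ℝ, 0 < c ∧ (∀ s, c ≤ deriv (φ k) s) ∧ ∀ s, deriv (φ k) s ≤ C)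
    (hA' : ∀ k s, |deriv (A k) s| ≤ ε₁)
    (hφ''' : ∀ k s, |deriv (deriv (deriv (φ k))) s| ≤ ε₃)
    (g : SchwartzMap ℝ ℂ) (hg0 : g 0 ≠ 0)
    (σ : ℝ → ℝ) (hσ : ContDiff ℝ 1 σ) (hσpos : ∀ s, 0 < σ s)
    (x : ℝ → ℂ) (hx : ∀ s, x s = ∑ k, (A k s : ℂ) * e2πi (φ k s))
    (Pi₀ : ℝ → ℝ)
    (hPi₀ : ∀ s, Pi₀ s = K * ε₁ * absMom (⇑g) 1 +
      (π / 3) * ε₃ * absMom (⇑g) 3 * (σ s) ^ 2 * ∑ k, A k s) :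
    ∀ (t η : ℝ),
      ‖adSTFT σ (⇑g) x t η -
        ∑ k, (A k t : ℂ) * e2πi (φ k t) *
          chirpFT (deriv (deriv (φ k)) t * (σ t) ^ 2) (⇑g) (σ t * (η - deriv (φ k) t))‖
      ≤ σ t * Pi₀ t := by
  intro t η
  have hs := hσpos t
  set S := σ t with hS
  -- The `k`-th component of the transform and of its approximation, after `τ = σ(t) u`; both are
  -- written as a bounded factor times `g`.
  let F : Fin K → ℝ → ℂ := fun k u =>
    ((A k (t + S * u) : ℂ) * e2πi (φ k (t + S * u)) * e2πi (-(η * (S * u)))) * g u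
  let H : Fin K → ℝ → ℂ := fun k u =>
    ((A k t : ℂ) * e2πi (φ k t + deriv (φ k) t * (S * u) +
      deriv (deriv (φ k)) t * (S * u) ^ 2 / 2) * e2πi (-(η * (S * u)))) * g u
  have hAc : ∀ k, Continuous (A k) := fun k => (hA2 k).continuous
  have hφc : ∀ k, Continuous (φ k) := fun k => (hφ3 k).continuous
  have he := continuous_e2πi
  have hF : ∀ k, Integrable (F k) := fun k => by
    obtain ⟨C, hC⟩ := hAbdd k
    have := hAc k
    have := hφc k
    refine integrable_bdd_mul_schwartz g (by fun_prop) (C := C) fun u => ?_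
    simpa [norm_e2πi] using hC (t + S * u)
  have hH : ∀ k, Integrable (H k) := fun k => by
    refine integrable_bdd_mul_schwartz g (by fun_prop) (C := |A k t|) fun u => ?_
    simp [norm_e2πi]
  have e1 : adSTFT σ g x t η = ∑ k, ∫ u, F k u := by
    rw [adSTFT_eq_integral_comp _ _ hs, ← integral_finsetSum _ fun k _ => hF k]
    congr 1 with u
    rw [hx, Finset.sum_mul, Finset.sum_mul]
    refine Finset.sum_congr rfl fun k _ => ?_
    simp only [F, ← hS]
    ring
  have e2 : ∀ k, (A k t : ℂ) * e2πi (φ k t) *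
      chirpFT (deriv (deriv (φ k)) t * S ^ 2) g (S * (η - deriv (φ k) t)) = ∫ u, H k u := by
    intro k
    rw [chirpFT, ← integral_const_mul]
    congr 1 with u
    have : e2πi (φ k t + deriv (φ k) t * (S * u) + deriv (deriv (φ k)) t * (S * u) ^ 2 / 2) *
        e2πi (-(η * (S * u))) = e2πi (φ k t) * e2πi (deriv (deriv (φ k)) t * S ^ 2 * u ^ 2 / 2) *
        e2πi (-(S * (η - deriv (φ k) t) * u)) := by
      simp only [← e2πi_add]
      congr 1
      ring
    simp only [H]
    linear_combination (-(A k t : ℂ) * g u) * this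
  have hm : ∀ n, Integrable (fun u : ℝ => |u| ^ n * ‖g u‖) := fun n => by
    simpa using g.integrable_pow_mul volume n
  have hk : ∀ k, ‖(∫ u, F k u) - ∫ u, H k u‖ ≤
      ε₁ * S * absMom g 1 + A k t * (π / 3 * ε₃ * S ^ 3) * absMom g 3 := by
    intro k
    rw [← integral_sub (hF k) (hH k), absMom, absMom, ← integral_const_mul, ← integral_const_mul,
      ← integral_add ((hm 1).const_mul _) ((hm 3).const_mul _)]
    refine norm_integral_le_of_norm_le (((hm 1).const_mul _).add ((hm 3).const_mul _))
      (Eventually.of_forall fun u => ?_)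
    have hb := norm_modulated_sub_chirp_le ((hA2 k).of_le (by norm_num)) (hφ3 k) (hApos k) (hA' k)
      (hφ''' k) t (S * u)
    simp only [F, H]
    rw [← sub_mul, ← sub_mul, norm_mul, norm_mul, norm_e2πi, mul_one]
    refine (mul_le_mul_of_nonneg_right hb (norm_nonneg _)).trans (le_of_eq ?_)
    rw [abs_mul, abs_of_pos hs]
    ring
  rw [e1, Finset.sum_congr rfl fun k _ => e2 k, ← Finset.sum_sub_distrib]
  refine (norm_sum_le_of_le _ fun k _ => hk k).trans (le_of_eq ?_)
  rw [hPi₀, ← hS, Finset.sum_add_distrib, Finset.sum_const, Finset.card_univ, Fintype.card_fin,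
    nsmul_eq_mul, ← Finset.sum_mul, ← Finset.sum_mul]
  ring

end
end

section
/- Let α > 0 and set τ₀ = e^{−2π²α²}. Then ∫_{|u| ≥ α} e^{−2π²u²} du ≤ (1/√(2π)) · τ₀ / (1 + √(1 − τ₀)). -/
/-!
The bound is the classical comparison of a square with its inscribed disc. Rationalizing, the right
side equals `(1 - √(1 - τ₀)) / √(2π)`, and `∫ exp (-2π²u²) = 1 / √(2π)` over the whole line, so the
claim says that the central mass `J = ∫_{|u| < α} exp (-2π²u²)` satisfies `(1 - τ₀) / (2π) ≤ J ^ 2`.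
By Fubini, `J ^ 2` is the integral of `exp (-2π²(x² + y²))` over the square `|x|, |y| < α`; the
square contains the disc of radius `α`, over which the integral is exactly `(1 - τ₀) / (2π)` by
polar coordinates (`integral_disc_gaussian`, `disc_le_sq_integral_gaussian`).
-/

open MeasureTheory Real Set Filter
open scoped Topology Real

noncomputable section

lemma integral_Ioo_mul_gaussian {b α : ℝ} (hb : 0 < b) (hα : 0 < α) :
    ∫ r in Ioo 0 α, r * Real.exp (-(b * r ^ 2)) = (1 - Real.exp (-(b * α ^ 2))) / (2 * b) := by
  rw [← integral_Ioc_eq_integral_Ioo, ← intervalIntegral.integral_of_le hα.le,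
    intervalIntegral.integral_eq_sub_of_hasDerivAt
      (f := fun r => -Real.exp (-(b * r ^ 2)) / (2 * b))]
  · simp
    ring
  · intro x _
    have h := (((((hasDerivAt_id x).pow 2).const_mul b).neg.exp).neg).div_const (2 * b)
    refine HasDerivAt.congr_deriv (f := fun r => -Real.exp (-(b * r ^ 2)) / (2 * b)) h ?_
    simp
    field_simp
  · exact Continuous.intervalIntegrable (by fun_prop) _ _

/-- The Gaussian mass of the open disc of radius `α`, computed in polar coordinates. -/
lemma integral_disc_gaussian {b α : ℝ} (hb : 0 < b) (hα : 0 < α) :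
    ∫ p : ℝ × ℝ, {p : ℝ × ℝ | p.1 ^ 2 + p.2 ^ 2 < α ^ 2}.indicator
      (fun p => Real.exp (-(b * (p.1 ^ 2 + p.2 ^ 2)))) p
      = π * (1 - Real.exp (-(b * α ^ 2))) / b := by
  rw [← integral_comp_polarCoord_symm]
  have hpol : ∀ p ∈ polarCoord.target,
      p.1 • {p : ℝ × ℝ | p.1 ^ 2 + p.2 ^ 2 < α ^ 2}.indicator
        (fun p => Real.exp (-(b * (p.1 ^ 2 + p.2 ^ 2)))) (polarCoord.symm p)
      = (Iio α).indicator (fun r => r * Real.exp (-(b * r ^ 2))) p.1 * (fun _ => (1 : ℝ)) p.2 := by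
    rintro ⟨r, θ⟩ hp
    have hr : 0 < r := by
      simpa using hp.1
    have hsq : (r * Real.cos θ) ^ 2 + (r * Real.sin θ) ^ 2 = r ^ 2 := by
      nlinarith [Real.sin_sq_add_cos_sq θ]
    by_cases h : r < α
    · have h2 : r ^ 2 < α ^ 2 := by gcongr
      simp [indicator, polarCoord_symm_apply, hsq, h, h2]
    · have h2 : ¬ r ^ 2 < α ^ 2 := by
        have := not_lt.1 h
        exact not_lt.2 (by gcongr)
      simp [indicator, polarCoord_symm_apply, hsq, h, h2]
  rw [setIntegral_congr_fun polarCoord.open_target.measurableSet hpol, polarCoord_target,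
    Measure.volume_eq_prod, setIntegral_prod_mul
      ((Iio α).indicator fun r => r * Real.exp (-(b * r ^ 2))) (fun _ => (1 : ℝ)), setIntegral_indicator measurableSet_Iio,
    Ioi_inter_Iio, integral_Ioo_mul_gaussian hb hα]
  simp [Real.pi_pos.le]
  field_simp
  norm_num

/-- The disc of radius `α` lies in the square `|x|, |y| < α`, whose Gaussian mass is a square by
Fubini. -/
lemma disc_le_sq_integral_gaussian {b α : ℝ} (hb : 0 < b) (hα : 0 < α) :
    π * (1 - Real.exp (-(b * α ^ 2))) / b
      ≤ (∫ u in {u : ℝ | α ≤ |u|}ᶜ, Real.exp (-(b * u ^ 2))) ^ 2 := by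
  have hm : MeasurableSet {u : ℝ | α ≤ |u|}ᶜ :=
    (measurableSet_le measurable_const measurable_abs).compl
  have hi : Integrable fun u : ℝ => Real.exp (-(b * u ^ 2)) := by
    simpa using integrable_exp_neg_mul_sq hb
  have hi' := hi.indicator hm
  rw [← integral_disc_gaussian hb hα, ← integral_indicator hm, sq (integral _ _), ← integral_prod_mul,
    ← Measure.volume_eq_prod]
  apply integral_mono_of_nonneg
  · exact Eventually.of_forall fun p => indicator_nonneg (fun _ _ => (Real.exp_pos _).le) _
  · exact hi'.mul_prod hi'
  · refine Eventually.of_forall fun p => ?_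
    apply indicator_le'
    · intro p hp
      have hp' : p.1 ^ 2 + p.2 ^ 2 < α ^ 2 := hp
      have h1 : |p.1| < α := abs_lt_of_sq_lt_sq (by nlinarith [sq_nonneg p.2]) hα.le
      have h2 : |p.2| < α := abs_lt_of_sq_lt_sq (by nlinarith [sq_nonneg p.1]) hα.le
      simp only [indicator, mem_compl_iff, mem_ofPred_eq, not_le, h1, h2, if_true]
      rw [← Real.exp_add]
      apply le_of_eq
      congr 1
      ring
    · intro p _
      exact mul_nonneg (indicator_nonneg (fun _ _ => (Real.exp_pos _).le) _)
        (indicator_nonneg (fun _ _ => (Real.exp_pos _).le) _)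

theorem statement14 (α τ₀ : ℝ) (hα : 0 < α)
    (hτ₀ : τ₀ = Real.exp (-(2 * π ^ 2 * α ^ 2))) :
    (∫ u in {u : ℝ | α ≤ |u|}, Real.exp (-(2 * π ^ 2 * u ^ 2))) ≤
      (Real.sqrt (2 * π))⁻¹ * τ₀ / (1 + Real.sqrt (1 - τ₀)) := by
  have hb : 0 < 2 * π ^ 2 := by positivity
  have hm : MeasurableSet {u : ℝ | α ≤ |u|} := measurableSet_le measurable_const measurable_abs
  have hi : Integrable fun u : ℝ => Real.exp (-(2 * π ^ 2 * u ^ 2)) := by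
    simpa using integrable_exp_neg_mul_sq hb
  have hsplit := integral_add_compl hm hi
  have htot : ∫ u : ℝ, Real.exp (-(2 * π ^ 2 * u ^ 2)) = (√(2 * π))⁻¹ := by
    have h := integral_gaussian (2 * π ^ 2)
    simp only [neg_mul] at h
    rw [h, ← Real.sqrt_inv]
    congr 1
    field_simp
  have hJ := disc_le_sq_integral_gaussian hb hα
  rw [← hτ₀] at hJ
  have hJ0 : 0 ≤ ∫ u in {u : ℝ | α ≤ |u|}ᶜ, Real.exp (-(2 * π ^ 2 * u ^ 2)) :=
    integral_nonneg fun _ => (Real.exp_pos _).le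
  have hJ' : √(1 - τ₀) * (√(2 * π))⁻¹
      ≤ ∫ u in {u : ℝ | α ≤ |u|}ᶜ, Real.exp (-(2 * π ^ 2 * u ^ 2)) := by
    rw [← div_eq_mul_inv, ← Real.sqrt_div' _ (by positivity)]
    refine Real.sqrt_le_iff.2 ⟨hJ0, le_of_eq_of_le ?_ hJ⟩
    field_simp
  have hτ1 : 0 ≤ 1 - τ₀ := by
    rw [hτ₀, sub_nonneg]
    exact Real.exp_le_one_iff.2 (by simp only [neg_nonpos]; positivity)
  have hrat : (√(2 * π))⁻¹ * τ₀ / (1 + √(1 - τ₀)) = (√(2 * π))⁻¹ * (1 - √(1 - τ₀)) := by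
    rw [div_eq_iff (by positivity)]
    linear_combination (√(2 * π))⁻¹ * Real.sq_sqrt hτ1
  rw [hrat]
  linarith

end
end
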